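/- Decreasing-then-negative behaviour of the first equation in each variable: define Eq₁(φ, β₁) = K̃ − λ·φ − Σ_{(x,p) : 1 ≤ p, 2p < x ≤ 56} κ̃_{x,p}·(x − 2p)·(1 − 1/(1 + (U/V)^{x−2p}·(1 − V^{−p}))), where K̃ = Σ_{(x,p) : 0 ≤ 2p ≤ x ≤ 56} (x − p)·κ̃_{x,p} and U = U(φ, β₁), V = V(φ, β₁). (i) For each fixed φ ∈ [0.525245, 0.619063], on the open interval I_φ = (2 − 3φ, 3(1 − φ)/2) (i.e. the β₁ with β₃ > 0 and β₂ > 0), there exists β₁^♦ ∈ I_φ such that β₁ ↦ Eq₁(φ, β₁) is strictly decreasing on (2 − 3φ, β₁^♦] ∩ I_φ and Eq₁(φ, β₁) < 0 for all β₁ ∈ [β₁^♦, 3(1 − φ)/2) ∩ I_φ; in particular every zero of Eq₁(φ, ·) in I_φ is < β₁^♦. (ii) Symmetrically, for each fixed β₁ ∈ [0.33018, 0.52891], on the interval J_{β₁} = ((2 − β₁)/3, 1 − 2β₁/3) there exists φ^♦ ∈ J_{β₁} such that φ ↦ Eq₁(φ, β₁) is strictly decreasing on ((2 − β₁)/3,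 φ^♦] ∩ J_{β₁} and Eq₁(φ, β₁) < 0 for all φ ∈ [φ^♦, 1 − 2β₁/3) ∩ J_{β₁}. -/

import Mathlib

/-- `U(φ, β₁) = 9(1−φ)β₃/(Y β₂)` where `β₂ = 3(1−φ) − 2β₁`, `β₃ = β₁ − 2 + 3φ`,
`Y = 3φ − β₁`. -/
noncomputable def Ufun (φ β₁ : ℝ) : ℝ :=
  9 * (1 - φ) * (β₁ - 2 + 3 * φ) / ((3 * φ - β₁) * (3 * (1 - φ) - 2 * β₁))

/-- `V(φ, β₁) = 1 + β₂²/(3 Y β₃)`. -/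
noncomputable def Vfun (φ β₁ : ℝ) : ℝ :=
  1 + (3 * (1 - φ) - 2 * β₁) ^ 2 / (3 * (3 * φ - β₁) * (β₁ - 2 + 3 * φ))

/-- The constraint polygon `D` for the pair `(φ, β₁)`. -/
def Dset : Set (ℝ × ℝ) :=
  {q | 0.525245 ≤ q.1 ∧ q.1 ≤ 0.619063 ∧ 0.33018 ≤ q.2 ∧ q.2 ≤ 0.52891 ∧
    0.33018 ≤ 3 * (1 - q.1) - 2 * q.2 ∧ 3 * (1 - q.1) - 2 * q.2 ≤ 0.52891 ∧
    0.077639 ≤ q.2 - 2 + 3 * q.1 ∧ q.2 - 2 + 3 * q.1 ≤ 0.21782}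

/-- `κ_{x,p}` for `λ = 3·4.506 = 13.518`. -/
noncomputable def kappa (x p : ℕ) : ℝ :=
  (2 : ℝ) ^ (-(x : ℝ)) * (Nat.choose x p : ℝ) *
    (Real.exp (-(13.518 : ℝ)) * (13.518 : ℝ) ^ x / (Nat.factorial x : ℝ))

/-- `κ̃_{x,p}`: `2κ_{x,p}` if `x > 2p`, `κ_{x,p}` if `x = 2p`, `0` if `x < 2p`. -/
noncomputable def kappaT (x p : ℕ) : ℝ :=
  if x < 2 * p then 0 else if 2 * p < x then 2 * kappa x p else kappa x p

/-- `K̃ = Σ_{0 ≤ 2p ≤ x ≤ 56} (x − p)·κ̃_{x,p}`. -/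
noncomputable def Ktilde : ℝ :=
  ∑ x ∈ Finset.range 57, ∑ p ∈ Finset.range (x + 1),
    if 2 * p ≤ x then ((x : ℝ) - (p : ℝ)) * kappaT x p else 0

/-- The first equation `Eq₁` (with `λ = 13.518`, `x_max = 56`). -/
noncomputable def Eq1 (φ β₁ : ℝ) : ℝ :=
  Ktilde - 13.518 * φ -
    ∑ x ∈ Finset.range 57, ∑ p ∈ Finset.range (x + 1),
      if 1 ≤ p ∧ 2 * p < x then
        kappaT x p * ((x : ℝ) - 2 * (p : ℝ)) *
          (1 - 1 / (1 + (Ufun φ β₁ / Vfun φ β₁) ^ (x - 2 * p) *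
            (1 - (Vfun φ β₁) ^ (-(p : ℤ)))))
      else 0

/-- The part of `κ_{x,p}` without the exponential factor, as a rational number. -/
def wq (x p : ℕ) : ℚ := (6759 / 1000) ^ x / ((Nat.factorial p : ℚ) * (Nat.factorial (x - p) : ℚ))

/-- `K̃` without the exponential factor. -/
def KQ : ℚ := ∑ x ∈ Finset.range 57, ∑ p ∈ Finset.range (x + 1),
  if 2 * p ≤ x then ((x : ℚ) - (p : ℚ)) * (if 2 * p < x then 2 * wq x p else wq x p) else 0

/-- Rounding down to three decimals. -/
def rdn (v : ℚ) : ℚ := ((⌊v * 1000⌋ : ℤ) : ℚ) / 1000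

/-- Truncated lower bound of the sum in `Eq1`. -/
def FQ (R Q : ℚ) : ℚ := ∑ x ∈ Finset.range 25, ∑ p ∈ Finset.range (x + 1),
  if 1 ≤ p ∧ 2 * p + 2 ≤ x then
    (2 * wq x p) * ((x : ℚ) - 2 * (p : ℚ)) *
      rdn (1 - 1 / (1 + R ^ (x - 2 * p) * (1 - (1 - Q ^ 2) ^ p))) else 0

theorem KQ_lt : KQ < 6098800 := by
  decide +kernel

theorem FQ_gt1 : 830407 < FQ (1148 / 1000) (367 / 1000) := by
  decide +kernel

theorem num1 : KQ - FQ (1148 / 1000) (367 / 1000) < 742000 * 13.518 * 0.525245 := by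
  have h1 := KQ_lt
  have h2 := FQ_gt1
  norm_num at h2 ⊢
  linarith

theorem FQ_gt2 : 185907 < FQ (69 / 100) (46 / 100) := by
  decide +kernel

theorem num2 : KQ - FQ (69 / 100) (46 / 100) < 742000 * 13.518 * (4716 / 8000) := by
  have h1 := KQ_lt
  have h2 := FQ_gt2
  norm_num at h2 ⊢
  linarith

theorem FQ_gt3 : 356924 < FQ (83 / 100) (46 / 100) := by
  decide +kernel

theorem num3 : KQ - FQ (83 / 100) (46 / 100) < 742000 * 13.518 * (45796 / 80000) := by
  have h1 := KQ_lt
  have h2 := FQ_gt3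
  norm_num at h2 ⊢
  linarith

theorem FQ_gt4 : 527942 < FQ (928 / 1000) (46 / 100) := by
  decide +kernel

theorem num4 : KQ - FQ (928 / 1000) (46 / 100) < 742000 * 13.518 * (44432 / 80000) := by
  have h1 := KQ_lt
  have h2 := FQ_gt4
  norm_num at h2 ⊢
  linarith

theorem FQ_gt5 : 737576 < FQ (104 / 100) (46 / 100) := by
  decide +kernel

theorem num5 : KQ - FQ (104 / 100) (46 / 100) < 742000 * 13.518 * (5345 / 10000) := by
  have h1 := KQ_lt
  have h2 := FQ_gt5
  norm_num at h2 ⊢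
  linarith


theorem exp_bound : Real.exp (-(13.518 : ℝ)) < 1 / 742000 := by
  have h1 : (2.7182818283 : ℝ) < Real.exp 1 := Real.exp_one_gt_d9
  have h2 : (1.678 : ℝ) ≤ Real.exp (0.518 : ℝ) := by
    refine le_trans ?_ (Real.sum_le_exp_of_nonneg (by norm_num) 7)
    norm_num [Finset.sum_range_succ, Nat.factorial]
  have h3 : Real.exp (13.518 : ℝ) = Real.exp 1 ^ 13 * Real.exp (0.518 : ℝ) := by
    rw [← Real.exp_nat_mul, ← Real.exp_add]
    norm_num
  have h4 : (2.7182818283 : ℝ) ^ 13 ≤ Real.exp 1 ^ 13 := by gcongr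
  have h5 : (742000 : ℝ) < Real.exp (13.518 : ℝ) := by
    rw [h3]
    calc (742000 : ℝ) < (2.7182818283 : ℝ) ^ 13 * 1.678 := by norm_num
      _ ≤ _ := by gcongr
  rw [Real.exp_neg, ← one_div]
  exact one_div_lt_one_div_of_lt (by norm_num) h5

theorem kappa_eq (x p : ℕ) (hp : p ≤ x) :
    kappa x p = Real.exp (-(13.518 : ℝ)) * ((wq x p : ℚ) : ℝ) := by
  unfold kappa wq
  rw [Nat.cast_choose ℝ hp, Real.rpow_neg (by norm_num), Real.rpow_natCast]
  push_cast
  have h1 : (Nat.factorial x : ℝ) ≠ 0 := by positivity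
  have h2 : (Nat.factorial p : ℝ) ≠ 0 := by positivity
  have h3 : (Nat.factorial (x - p) : ℝ) ≠ 0 := by positivity
  have h4 : ((13.518 : ℝ)) ^ x = 2 ^ x * (6759 / 1000 : ℝ) ^ x := by
    rw [← mul_pow]; norm_num
  rw [h4]
  field_simp

theorem kappa_pos (x p : ℕ) (hp : p ≤ x) : 0 < kappa x p := by
  unfold kappa
  have : 0 < Nat.choose x p := Nat.choose_pos hp
  positivity

theorem Ktilde_eq : Ktilde = Real.exp (-(13.518 : ℝ)) * ((KQ : ℚ) : ℝ) := by
  unfold Ktilde KQ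
  rw [Rat.cast_sum, Finset.mul_sum]
  refine Finset.sum_congr rfl fun x _ => ?_
  rw [Rat.cast_sum, Finset.mul_sum]
  refine Finset.sum_congr rfl fun p hp => ?_
  have hp' : p ≤ x := by have := Finset.mem_range.1 hp; omega
  by_cases h : 2 * p ≤ x
  · rw [if_pos h, if_pos h]
    unfold kappaT
    rw [if_neg (by omega), kappa_eq x p hp']
    by_cases h2 : 2 * p < x
    · rw [if_pos h2, if_pos h2]; push_cast; ring
    · rw [if_neg h2, if_neg h2]; push_cast; ring
  · rw [if_neg h, if_neg h]; simp

theorem kappaT_pos (x p : ℕ) (h : 2 * p < x) : 0 < kappaT x p := by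
  unfold kappaT
  rw [if_neg (by omega), if_pos h]
  have := kappa_pos x p (by omega)
  positivity

/-- The quantity `T`. -/
noncomputable def TT (r q : ℝ) (d p : ℕ) : ℝ := r ^ d * (1 - (1 - q ^ 2) ^ p)

/-- The sum in `Eq1` in the new coordinates. -/
noncomputable def GG (r q : ℝ) : ℝ :=
  ∑ x ∈ Finset.range 57, ∑ p ∈ Finset.range (x + 1),
      if 1 ≤ p ∧ 2 * p < x then
        kappaT x p * ((x : ℝ) - 2 * (p : ℝ)) * (1 - 1 / (1 + TT r q (x - 2 * p) p))
      else 0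

theorem geom_id (q : ℝ) (p : ℕ) :
    1 - (1 - q ^ 2) ^ p = q ^ 2 * ∑ i ∈ Finset.range p, (1 - q ^ 2) ^ i := by
  have := mul_neg_geom_sum (1 - q ^ 2) p
  rw [← this]; ring

theorem TT_nonneg (r q : ℝ) (d p : ℕ) (hr : 0 ≤ r) (h0 : 0 < q) (h1 : q < 1) :
    0 ≤ TT r q d p := by
  unfold TT
  have h2 : 0 ≤ 1 - q ^ 2 := by nlinarith
  have : (1 - q ^ 2) ^ p ≤ 1 := pow_le_one₀ h2 (by nlinarith)
  have := pow_nonneg hr d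
  nlinarith

theorem geom_anti (q Q : ℝ) (p : ℕ) (h0 : 0 < q) (h : q ≤ Q) (hQ : Q < 1) :
    ∑ i ∈ Finset.range p, (1 - Q ^ 2) ^ i ≤ ∑ i ∈ Finset.range p, (1 - q ^ 2) ^ i := by
  refine Finset.sum_le_sum fun i _ => ?_
  have h2 : 0 ≤ 1 - Q ^ 2 := by nlinarith
  exact pow_le_pow_left₀ h2 (by nlinarith) i

theorem TT_strict (r₁ r₂ q₁ q₂ : ℝ) (d p : ℕ) (hd : 1 ≤ d) (hp : 1 ≤ p) (h0 : 0 < q₁)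
    (h : q₁ < q₂) (hq : q₂ < 1) (hr₂ : 0 < r₂) (hr : r₂ * q₂ ^ 2 < r₁ * q₁ ^ 2) :
    TT r₂ q₂ d p < TT r₁ q₁ d p := by
  have hsq : q₁ ^ 2 < q₂ ^ 2 := by nlinarith
  have hq1 : 0 < q₁ ^ 2 := by positivity
  have hr12 : r₂ < r₁ := by
    by_contra hc
    push Not at hc
    nlinarith
  obtain ⟨e, rfl⟩ : ∃ e, d = e + 1 := ⟨d - 1, by omega⟩
  obtain ⟨k, rfl⟩ : ∃ k, p = k + 1 := ⟨p - 1, by omega⟩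
  unfold TT
  rw [geom_id, geom_id]
  have hS := geom_anti q₁ q₂ (k + 1) h0 h.le hq
  have hS0 : 0 < ∑ i ∈ Finset.range (k + 1), (1 - q₂ ^ 2) ^ i := by
    have : 0 < 1 - q₂ ^ 2 := by nlinarith
    exact Finset.sum_pos (fun i _ => by positivity) (by simp)
  set S₁ := ∑ i ∈ Finset.range (k + 1), (1 - q₁ ^ 2) ^ i
  set S₂ := ∑ i ∈ Finset.range (k + 1), (1 - q₂ ^ 2) ^ i
  have he : r₂ ^ e ≤ r₁ ^ e := by gcongr
  have he0 : 0 < r₂ ^ e := by positivity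
  calc r₂ ^ (e + 1) * (q₂ ^ 2 * S₂) = r₂ ^ e * S₂ * (r₂ * q₂ ^ 2) := by ring
    _ < r₂ ^ e * S₂ * (r₁ * q₁ ^ 2) := by
        apply mul_lt_mul_of_pos_left hr; positivity
    _ ≤ r₁ ^ e * S₁ * (r₁ * q₁ ^ 2) := by
        have : 0 < r₁ := hr₂.trans hr12
        gcongr
    _ = _ := by ring

theorem frac_lt (a b : ℝ) (ha : 0 ≤ a) (h : a < b) : 1 - 1 / (1 + a) < 1 - 1 / (1 + b) := by
  have : 1 / (1 + b) < 1 / (1 + a) := one_div_lt_one_div_of_lt (by linarith) (by linarith)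
  linarith

theorem frac_le (a b : ℝ) (ha : 0 ≤ a) (h : a ≤ b) : 1 - 1 / (1 + a) ≤ 1 - 1 / (1 + b) := by
  have : 1 / (1 + b) ≤ 1 / (1 + a) := one_div_le_one_div_of_le (by linarith) (by linarith)
  linarith

theorem GG_strict (r₁ r₂ q₁ q₂ : ℝ) (h0 : 0 < q₁)
    (h : q₁ < q₂) (hq : q₂ < 1) (hr₂ : 0 < r₂) (hr : r₂ * q₂ ^ 2 < r₁ * q₁ ^ 2) :
    GG r₂ q₂ < GG r₁ q₁ := by
  have key : ∀ x p : ℕ, 1 ≤ p → 2 * p < x →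
      kappaT x p * ((x : ℝ) - 2 * (p : ℝ)) * (1 - 1 / (1 + TT r₂ q₂ (x - 2 * p) p)) <
      kappaT x p * ((x : ℝ) - 2 * (p : ℝ)) * (1 - 1 / (1 + TT r₁ q₁ (x - 2 * p) p)) := by
    intro x p hp hx
    have h1 := kappaT_pos x p hx
    have h2 : (0 : ℝ) < (x : ℝ) - 2 * (p : ℝ) := by
      have : ((2 * p : ℕ) : ℝ) < (x : ℝ) := by exact_mod_cast hx
      push_cast at this; linarith
    apply mul_lt_mul_of_pos_left _ (by positivity)
    apply frac_lt
    · exact TT_nonneg _ _ _ _ hr₂.le (h0.trans h) hq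
    · exact TT_strict _ _ _ _ _ _ (by omega) hp h0 h hq hr₂ hr
  have key2 : ∀ x p : ℕ, (if 1 ≤ p ∧ 2 * p < x then
      kappaT x p * ((x : ℝ) - 2 * (p : ℝ)) * (1 - 1 / (1 + TT r₂ q₂ (x - 2 * p) p)) else 0) ≤
      (if 1 ≤ p ∧ 2 * p < x then
      kappaT x p * ((x : ℝ) - 2 * (p : ℝ)) * (1 - 1 / (1 + TT r₁ q₁ (x - 2 * p) p)) else 0) := by
    intro x p
    split_ifs with hc
    · exact (key x p hc.1 hc.2).le
    · exact le_rfl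
  unfold GG
  refine Finset.sum_lt_sum (fun x _ => Finset.sum_le_sum fun p _ => key2 x p)
    ⟨3, by simp, Finset.sum_lt_sum (fun p _ => key2 3 p) ⟨1, by simp, ?_⟩⟩
  rw [if_pos (by norm_num), if_pos (by norm_num)]
  exact key 3 1 (by norm_num) (by norm_num)

theorem rdn_le (v : ℚ) : rdn v ≤ v := by
  unfold rdn
  have := Int.floor_le (v * 1000)
  rw [div_le_iff₀ (by norm_num)]
  exact this

theorem TT_lower (r q R Q : ℝ) (d p : ℕ) (hd : 2 ≤ d) (h0 : 0 < q)
    (h : q ≤ Q) (hQ : Q < 1) (hR : 0 < R) (hr : R * Q ≤ r * q) :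
    TT R Q d p ≤ TT r q d p := by
  have hr12 : R ≤ r := by
    by_contra hc
    push Not at hc
    nlinarith
  obtain ⟨e, rfl⟩ : ∃ e, d = e + 2 := ⟨d - 2, by omega⟩
  unfold TT
  rw [geom_id, geom_id]
  have hS := geom_anti q Q p h0 h hQ
  have hS0 : 0 ≤ ∑ i ∈ Finset.range p, (1 - Q ^ 2) ^ i := by
    have : 0 < 1 - Q ^ 2 := by nlinarith
    positivity
  set S₁ := ∑ i ∈ Finset.range p, (1 - q ^ 2) ^ i
  set S₂ := ∑ i ∈ Finset.range p, (1 - Q ^ 2) ^ i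
  have hS1 : 0 ≤ S₁ := hS0.trans hS
  have hr0 : 0 < r := by linarith
  have hQ0 : 0 < Q := by linarith
  calc R ^ (e + 2) * (Q ^ 2 * S₂) = R ^ e * S₂ * (R * Q) ^ 2 := by ring
    _ ≤ r ^ e * S₁ * (r * q) ^ 2 := by gcongr
    _ = _ := by ring

theorem GG_lower (r q : ℝ) (R Q : ℚ) (h0 : 0 < q)
    (h : q ≤ Q) (hQ : (Q : ℝ) < 1) (hR : (0 : ℝ) < R) (hr : (R : ℝ) * Q ≤ r * q) :
    Real.exp (-(13.518 : ℝ)) * ((FQ R Q : ℚ) : ℝ) ≤ GG r q := by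
  have hr0 : 0 ≤ r := by
    by_contra hc
    push Not at hc
    have : 0 < (R : ℝ) * Q := by
      have : (0 : ℝ) < Q := by linarith
      positivity
    nlinarith
  have key : ∀ x p : ℕ, p ≤ x → 0 ≤ (if 1 ≤ p ∧ 2 * p < x then
      kappaT x p * ((x : ℝ) - 2 * (p : ℝ)) * (1 - 1 / (1 + TT r q (x - 2 * p) p)) else 0) := by
    intro x p _
    split_ifs with hc
    · have h1 := kappaT_pos x p hc.2
      have h2 : (0 : ℝ) < (x : ℝ) - 2 * (p : ℝ) := by
        have : ((2 * p : ℕ) : ℝ) < (x : ℝ) := by exact_mod_cast hc.2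
        push_cast at this; linarith
      have h3 := TT_nonneg r q (x - 2 * p) p hr0 h0 (by linarith)
      have h4 := frac_le 0 _ le_rfl h3
      norm_num at h4
      have h5 : 0 ≤ 1 - 1 / (1 + TT r q (x - 2 * p) p) := by
        rw [one_div]; linarith
      positivity
    · exact le_rfl
  unfold GG FQ
  rw [Rat.cast_sum, Finset.mul_sum]
  refine le_trans (Finset.sum_le_sum ?_) (Finset.sum_le_sum_of_subset_of_nonneg
    (show Finset.range 25 ⊆ Finset.range 57 by
      intro y hy; simp only [Finset.mem_range] at hy ⊢; omega)
    (fun x _ _ => Finset.sum_nonneg fun p hp => key x p (by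
      have := Finset.mem_range.1 hp; omega)))
  intro x _
  rw [Rat.cast_sum, Finset.mul_sum]
  refine Finset.sum_le_sum fun p hp => ?_
  have hpx : p ≤ x := by have := Finset.mem_range.1 hp; omega
  by_cases hc : 1 ≤ p ∧ 2 * p + 2 ≤ x
  · rw [if_pos hc, if_pos ⟨hc.1, by omega⟩]
    have h1 := kappaT_pos x p (by omega)
    have h2 : (0 : ℝ) < (x : ℝ) - 2 * (p : ℝ) := by
      have : ((2 * p : ℕ) : ℝ) < (x : ℝ) := by exact_mod_cast (by omega : 2 * p < x)
      push_cast at this; linarith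
    have hk : kappaT x p = Real.exp (-(13.518 : ℝ)) * (2 * ((wq x p : ℚ) : ℝ)) := by
      unfold kappaT
      rw [if_neg (by omega), if_pos (by omega), kappa_eq x p hpx]; ring
    have h3 : ((rdn (1 - 1 / (1 + R ^ (x - 2 * p) * (1 - (1 - Q ^ 2) ^ p))) : ℚ) : ℝ) ≤
        1 - 1 / (1 + TT r q (x - 2 * p) p) := by
      have ha : ((rdn (1 - 1 / (1 + R ^ (x - 2 * p) * (1 - (1 - Q ^ 2) ^ p))) : ℚ) : ℝ) ≤
          (((1 - 1 / (1 + R ^ (x - 2 * p) * (1 - (1 - Q ^ 2) ^ p))) : ℚ) : ℝ) := by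
        exact_mod_cast rdn_le _
      refine ha.trans ?_
      push_cast
      have hb := frac_le (TT R Q (x - 2 * p) p) (TT r q (x - 2 * p) p)
        (TT_nonneg _ _ _ _ hR.le (by linarith) hQ)
        (TT_lower _ _ _ _ _ _ (by omega) h0 h hQ hR hr)
      unfold TT at hb ⊢
      exact hb
    calc _ = kappaT x p * ((x : ℝ) - 2 * (p : ℝ)) *
          ((rdn (1 - 1 / (1 + R ^ (x - 2 * p) * (1 - (1 - Q ^ 2) ^ p))) : ℚ) : ℝ) := by
          rw [hk]; push_cast; ring
      _ ≤ _ := by gcongr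
  · rw [if_neg hc]
    simpa using key x p hpx

theorem neg_of (r q φ : ℝ) (R Q Φ : ℚ)
    (hnum : KQ - FQ R Q < 742000 * 13.518 * Φ) (h0 : 0 < q) (hφ : (Φ : ℝ) ≤ φ) (hΦ : 0 < Φ)
    (h : q ≤ Q) (hQ : (Q : ℝ) < 1) (hR : (0 : ℝ) < R) (hr : (R : ℝ) * Q ≤ r * q) :
    Ktilde - 13.518 * φ - GG r q < 0 := by
  have h1 := GG_lower r q R Q h0 h hQ hR hr
  have h2 := exp_bound
  have h3 := Real.exp_pos (-(13.518 : ℝ))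
  have h4 : ((KQ : ℚ) : ℝ) - ((FQ R Q : ℚ) : ℝ) < 742000 * 13.518 * (Φ : ℝ) := by
    have : (((KQ - FQ R Q : ℚ)) : ℝ) < ((742000 * 13.518 * Φ : ℚ) : ℝ) := by exact_mod_cast hnum
    push_cast at this
    norm_num at this ⊢
    linarith
  rw [Ktilde_eq]
  have hΦ' : (0 : ℝ) < Φ := by exact_mod_cast hΦ
  have h5 := mul_lt_mul_of_pos_left h4 h3
  have h6 : Real.exp (-(13.518 : ℝ)) * (742000 * 13.518 * (Φ : ℝ)) < 13.518 * (Φ : ℝ) := by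
    calc _ < (1 / 742000) * (742000 * 13.518 * (Φ : ℝ)) := by
          apply mul_lt_mul_of_pos_right h2; positivity
      _ = _ := by ring
  linarith

/-- The new coordinate. -/
noncomputable def qq (φ β : ℝ) : ℝ := (3 * (1 - φ) - 2 * β) / (β - 3 + 6 * φ)

/-- The ratio `U / V` in the new coordinates. -/
noncomputable def rr (φ β : ℝ) : ℝ := 3 * (1 - φ) / (3 * (1 - φ) - 2 * β) * (1 - qq φ β) ^ 2

theorem Eq1_eq (φ β : ℝ) (h2 : 0 < 3 * (1 - φ) - 2 * β) (h3 : 0 < β - 2 + 3 * φ) :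
    Eq1 φ β = Ktilde - 13.518 * φ - GG (rr φ β) (qq φ β) := by
  have hY : 0 < 3 * φ - β := by linarith
  have hD : 0 < β - 3 + 6 * φ := by linarith
  have e1 : (Vfun φ β)⁻¹ = 1 - qq φ β ^ 2 := by
    have : Vfun φ β = (β - 3 + 6 * φ) ^ 2 / (3 * (3 * φ - β) * (β - 2 + 3 * φ)) := by
      unfold Vfun; field_simp; ring
    rw [this, qq]; field_simp; ring
  have e2 : Ufun φ β / Vfun φ β = rr φ β := by
    have hDn := hD.ne'
    have h2n := h2.ne'
    have hYn := hY.ne'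
    have e3 : 1 - qq φ β = 3 * (β - 2 + 3 * φ) / (β - 3 + 6 * φ) := by
      unfold qq; rw [eq_div_iff hDn, sub_mul, div_mul_cancel₀ _ hDn]; ring
    have e4 : 1 - qq φ β ^ 2 = 3 * (3 * φ - β) * (β - 2 + 3 * φ) / (β - 3 + 6 * φ) ^ 2 := by
      unfold qq; rw [div_pow, eq_div_iff (pow_ne_zero 2 hDn), sub_mul,
        div_mul_cancel₀ _ (pow_ne_zero 2 hDn)]; ring
    rw [div_eq_mul_inv, e1, e4]
    unfold Ufun rr
    rw [e3, div_pow, div_mul_div_comm, div_mul_div_comm,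
      div_eq_div_iff (by positivity) (by positivity)]
    ring
  unfold Eq1 GG TT
  rw [e2]
  simp only [zpow_neg, zpow_natCast, ← inv_pow, e1]

theorem qq_bounds (φ β : ℝ) (h2 : 0 < 3 * (1 - φ) - 2 * β) (h3 : 0 < β - 2 + 3 * φ) :
    0 < qq φ β ∧ qq φ β < 1 := by
  have hD : 0 < β - 3 + 6 * φ := by linarith
  unfold qq
  exact ⟨by positivity, by rw [div_lt_one hD]; linarith⟩

theorem rr_pos (φ β : ℝ) (h1 : φ < 1) (h2 : 0 < 3 * (1 - φ) - 2 * β) (h3 : 0 < β - 2 + 3 * φ) :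
    0 < rr φ β := by
  obtain ⟨_, hb⟩ := qq_bounds φ β h2 h3
  unfold rr
  have : 0 < 1 - qq φ β := by linarith
  have : 0 < 1 - φ := by linarith
  positivity

theorem rr_A (φ β : ℝ) (h2 : 0 < 3 * (1 - φ) - 2 * β) (h3 : 0 < β - 2 + 3 * φ)
    (h4 : 0 < 3 * φ - 1) :
    rr φ β * qq φ β = (1 - φ) / (3 * φ - 1) * ((2 + qq φ β) * (1 - qq φ β) ^ 2) := by
  have hD : 0 < β - 3 + 6 * φ := by linarith
  have e : 2 + qq φ β = 3 * (3 * φ - 1) / (β - 3 + 6 * φ) := by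
    unfold qq
    have hDn := hD.ne'
    rw [eq_div_iff hDn, add_mul, div_mul_cancel₀ _ hDn]; ring
  rw [e]
  unfold rr
  generalize (1 - qq φ β) ^ 2 = z
  unfold qq
  field_simp

theorem rr_B (φ β : ℝ) (h2 : 0 < 3 * (1 - φ) - 2 * β) (h3 : 0 < β - 2 + 3 * φ)
    (h4 : 0 < 1 - β) :
    rr φ β * qq φ β = (2 * β / (3 * (1 - β)) * (1 + 2 * qq φ β) + qq φ β) * (1 - qq φ β) ^ 2 := by
  have hD : 0 < β - 3 + 6 * φ := by linarith
  have e : 1 + 2 * qq φ β = 3 * (1 - β) / (β - 3 + 6 * φ) := by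
    unfold qq
    have hDn := hD.ne'
    rw [eq_div_iff hDn, add_mul, mul_assoc, div_mul_cancel₀ _ hDn]; ring
  rw [e]
  unfold rr
  generalize (1 - qq φ β) ^ 2 = z
  unfold qq
  field_simp
  ring

theorem poly1 (a b : ℝ) (ha : 0.367 ≤ a) (hab : a < b) (hb : b < 1) :
    (2 + b) * (1 - b) ^ 2 * b < (2 + a) * (1 - a) ^ 2 * a := by
  have h : 0 < (a + b) * (3 - a ^ 2 - b ^ 2) - 2 := by
    nlinarith [mul_pos (sub_pos.2 hab) (sub_pos.2 hb), mul_nonneg (sub_nonneg.2 ha) (sub_pos.2 hb).le,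
      mul_nonneg (mul_nonneg (sub_nonneg.2 ha) (sub_pos.2 hb).le) (sub_pos.2 hab).le,
      mul_nonneg (sub_nonneg.2 ha) (sub_pos.2 (hab.trans hb)).le,
      mul_nonneg (mul_nonneg (sub_nonneg.2 ha) (sub_pos.2 (hab.trans hb)).le) (sub_nonneg.2 ha),
      mul_nonneg (mul_nonneg (sub_nonneg.2 ha) (sub_pos.2 hb).le) (sub_nonneg.2 ha),
      mul_pos (mul_pos (sub_pos.2 hab) (sub_pos.2 hb)) (sub_pos.2 hab)]
  nlinarith [mul_pos (sub_pos.2 hab) h]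

/-- Derivative-based monotonicity of the polynomial in the second case. -/
theorem poly2 (B a b : ℝ) (hB : 0.3286 ≤ B) (ha : 0.46 ≤ a) (hab : a < b) (hb : b < 1) :
    (B * (1 + 2 * b) + b) * (1 - b) ^ 2 * b < (B * (1 + 2 * a) + a) * (1 - a) ^ 2 * a := by
  have hd : ∀ x : ℝ, HasDerivAt (fun x : ℝ => (B * (1 + 2 * x) + x) * (1 - x) ^ 2 * x)
      ((1 - x) * (B + (2 + B) * x - 4 * (1 + 2 * B) * x ^ 2)) x := by
    intro x
    have h1 := hasDerivAt_id x
    have := ((((((h1.const_mul 2).const_add 1).const_mul B).add h1).mul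
      ((h1.const_sub 1).pow 2)).mul h1)
    refine HasDerivAt.congr_deriv (f := fun x : ℝ => (B * (1 + 2 * x) + x) * (1 - x) ^ 2 * x) this ?_
    simp
    ring
  have hanti : StrictAntiOn (fun x : ℝ => (B * (1 + 2 * x) + x) * (1 - x) ^ 2 * x)
      (Set.Icc 0.46 1) := by
    apply strictAntiOn_of_deriv_neg (convex_Icc _ _)
    · exact fun x _ => (hd x).continuousAt.continuousWithinAt
    · intro x hx
      rw [interior_Icc] at hx
      rw [(hd x).deriv]
      have h1 : 0 < 1 - x := by linarith [hx.2]
      have h2 : B + (2 + B) * x - 4 * (1 + 2 * B) * x ^ 2 < 0 := by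
        have hx1 := hx.1
        have h3 : 0 < 8 * x ^ 2 - x - 1 := by nlinarith
        nlinarith [mul_nonneg (sub_nonneg.2 hB) h3.le]
      nlinarith
  exact hanti ⟨ha, (hab.trans hb).le⟩ ⟨(ha.trans hab.le), hb.le⟩ hab

theorem lowB (B q B0 m : ℝ) (hB : B0 ≤ B) (hB0 : 0 ≤ B0) (h0 : 0 < q) (h1 : q ≤ 0.46)
    (hm0 : m ≤ B0) (hm1 : m ≤ (B0 + (1 + 2 * B0) * 0.46) * 0.54 ^ 2) :
    m ≤ (B * (1 + 2 * q) + q) * (1 - q) ^ 2 := by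
  have hs : (B0 * (1 + 2 * q) + q) * (1 - q) ^ 2 ≤ (B * (1 + 2 * q) + q) * (1 - q) ^ 2 := by
    gcongr
  refine le_trans ?_ hs
  -- concavity-type estimate: the cubic lies above its chord on `[0, 0.46]`
  have hq : 0 ≤ q * (0.46 - q) := mul_nonneg h0.le (by linarith)
  have e1 : 0 ≤ B0 * (q * (0.46 - q)) := mul_nonneg hB0 hq
  have e2 : 0 ≤ q * (q * (0.46 - q)) := mul_nonneg h0.le hq
  have e3 : 0 ≤ B0 * (q * (q * (0.46 - q))) := mul_nonneg hB0 e2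
  have e4 : 0 ≤ (0.46 - q) * (0.46 * (B0 - m)) := mul_nonneg (by linarith) (by linarith)
  have e5 : 0 ≤ q * ((B0 + (1 + 2 * B0) * 0.46) * 0.54 ^ 2 - m) := mul_nonneg h0.le (by linarith)
  nlinarith

theorem qq_anti_β (φ s t : ℝ) (hs : 0 < s - 3 + 6 * φ) (hst : s < t)
    (h2 : 0 < 3 * (1 - φ) - 2 * t) : qq φ t < qq φ s := by
  unfold qq
  rw [div_lt_div_iff₀ (by linarith) hs]
  nlinarith

theorem qq_anti_φ (β s t : ℝ) (hs : 0 < β - 3 + 6 * s) (hst : s < t)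
    (h2 : 0 < 3 * (1 - t) - 2 * β) : qq t β < qq s β := by
  unfold qq
  rw [div_lt_div_iff₀ (by linarith) hs]
  nlinarith

theorem case2_neg (φ β : ℝ) (h2 : 0 < 3 * (1 - φ) - 2 * β) (h3 : 0 < β - 2 + 3 * φ)
    (h4 : β < 1) (R Φ : ℚ) (t0 B0 : ℝ)
    (hnum : KQ - FQ R (46 / 100) < 742000 * 13.518 * Φ) (hΦ : 0 < Φ) (hR : 0 < R)
    (hφ : (Φ : ℝ) ≤ φ) (hq : qq φ β ≤ 0.46) (ht : t0 ≤ β) (hB0 : 0 ≤ B0)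
    (hB : 3 * (1 - t0) * B0 ≤ 2 * t0)
    (hm0 : (R : ℝ) * 0.46 ≤ B0) (hm1 : (R : ℝ) * 0.46 ≤ (B0 + (1 + 2 * B0) * 0.46) * 0.54 ^ 2) :
    Eq1 φ β < 0 := by
  obtain ⟨q0, q1⟩ := qq_bounds φ β h2 h3
  rw [Eq1_eq φ β h2 h3]
  have e : (((46 / 100 : ℚ)) : ℝ) = 0.46 := by norm_num
  refine neg_of _ _ _ R (46 / 100) Φ hnum q0 hφ hΦ (by rw [e]; exact hq) (by rw [e]; norm_num)
    (by exact_mod_cast hR) ?_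
  rw [e, rr_B φ β h2 h3 (by linarith)]
  refine lowB _ _ B0 _ ?_ hB0 q0 hq hm0 hm1
  rw [le_div_iff₀ (by linarith)]
  nlinarith

theorem case2_all (φ β : ℝ) (h2 : 0 < 3 * (1 - φ) - 2 * β) (h3 : 0 < β - 2 + 3 * φ)
    (hβ : 0.33018 ≤ β) (hβ' : β ≤ 0.52891)
    (ha : (4.38 - 2.46 * β) / 5.76 ≤ φ) : Eq1 φ β < 0 := by
  have hD : 0 < β - 3 + 6 * φ := by linarith
  rw [div_le_iff₀ (by norm_num)] at ha
  have hq : qq φ β ≤ 0.46 := by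
    unfold qq
    rw [div_le_iff₀ hD]
    linarith
  have h4 : β < 1 := by linarith
  by_cases c1 : β ≤ 0.4
  · exact case2_neg φ β h2 h3 h4 (69 / 100) (4716 / 8000) 0.33018 0.3286 num2 (by norm_num)
      (by norm_num) (by norm_num; linarith) hq hβ (by norm_num) (by norm_num) (by norm_num)
      (by norm_num)
  push Not at c1
  by_cases c2 : β ≤ 0.44
  · exact case2_neg φ β h2 h3 h4 (83 / 100) (45796 / 80000) 0.4 0.4444 num3 (by norm_num)
      (by norm_num) (by norm_num; linarith) hq c1.le (by norm_num) (by norm_num) (by norm_num)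
      (by norm_num)
  push Not at c2
  by_cases c3 : β ≤ 0.48
  · exact case2_neg φ β h2 h3 h4 (928 / 1000) (44432 / 80000) 0.44 0.5238 num4 (by norm_num)
      (by norm_num) (by norm_num; linarith) hq c2.le (by norm_num) (by norm_num) (by norm_num)
      (by norm_num)
  push Not at c3
  exact case2_neg φ β h2 h3 h4 (104 / 100) (5345 / 10000) 0.48 0.6153 num5 (by norm_num)
      (by norm_num) (by norm_num; linarith) hq c3.le (by norm_num) (by norm_num) (by norm_num)
      (by norm_num)

theorem case1_all (φ β : ℝ) (h2 : 0 < 3 * (1 - φ) - 2 * β) (h3 : 0 < β - 2 + 3 * φ)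
    (hφ : 0.525245 ≤ φ) (hφ' : φ ≤ 0.619063)
    (ha : (3 * (1 - φ) - 0.367 * (6 * φ - 3)) / 2.367 ≤ β) : Eq1 φ β < 0 := by
  have hD : 0 < β - 3 + 6 * φ := by linarith
  rw [div_le_iff₀ (by norm_num)] at ha
  have hq : qq φ β ≤ 0.367 := by
    unfold qq
    rw [div_le_iff₀ hD]
    linarith
  obtain ⟨q0, q1⟩ := qq_bounds φ β h2 h3
  rw [Eq1_eq φ β h2 h3]
  refine neg_of _ _ _ (1148 / 1000) (367 / 1000) 0.525245 num1 q0 ?_ (by norm_num) ?_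
    (by norm_num) (by norm_num) ?_
  · norm_num at hφ ⊢; linarith
  · norm_num at hq ⊢; linarith
  · rw [rr_A φ β h2 h3 (by linarith)]
    have hA : (0.4444 : ℝ) ≤ (1 - φ) / (3 * φ - 1) := by
      rw [le_div_iff₀ (by linarith)]
      linarith
    have hp : (2.367 * 0.633 ^ 2 : ℝ) ≤ (2 + qq φ β) * (1 - qq φ β) ^ 2 := by
      have : 0 ≤ 0.367 - qq φ β := by linarith
      nlinarith [mul_nonneg this q0.le, mul_nonneg (mul_nonneg this q0.le) q0.le,
        mul_nonneg this this]
    calc _ ≤ (0.4444 : ℝ) * (2.367 * 0.633 ^ 2) := by norm_num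
      _ ≤ _ := by gcongr

/-- decreasing-then-negative behaviour of the first equation in each
variable.  (i) For fixed `φ ∈ [0.525245, 0.619063]`, on `I_φ = (2 − 3φ, 3(1 − φ)/2)`
there is `β₁^♦ ∈ I_φ` with `Eq₁(φ, ·)` strictly decreasing on `(2 − 3φ, β₁^♦]` and
negative on `[β₁^♦, 3(1 − φ)/2)`; in particular every zero of `Eq₁(φ, ·)` in `I_φ` is
`< β₁^♦`.  (ii) Symmetrically in `φ` for fixed `β₁ ∈ [0.33018, 0.52891]` on
`J_{β₁} = ((2 − β₁)/3, 1 − 2β₁/3)`. -/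
theorem Eq1_decreasing_then_negative :
    (∀ φ : ℝ, 0.525245 ≤ φ → φ ≤ 0.619063 →
        ∃ b ∈ Set.Ioo (2 - 3 * φ) (3 * (1 - φ) / 2),
          StrictAntiOn (fun t => Eq1 φ t) (Set.Ioc (2 - 3 * φ) b) ∧
            (∀ t ∈ Set.Ico b (3 * (1 - φ) / 2), Eq1 φ t < 0) ∧
            (∀ t ∈ Set.Ioo (2 - 3 * φ) (3 * (1 - φ) / 2), Eq1 φ t = 0 → t < b)) ∧
      (∀ β₁ : ℝ, 0.33018 ≤ β₁ → β₁ ≤ 0.52891 →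
        ∃ a ∈ Set.Ioo ((2 - β₁) / 3) (1 - 2 * β₁ / 3),
          StrictAntiOn (fun t => Eq1 t β₁) (Set.Ioc ((2 - β₁) / 3) a) ∧
            (∀ t ∈ Set.Ico a (1 - 2 * β₁ / 3), Eq1 t β₁ < 0) ∧
            (∀ t ∈ Set.Ioo ((2 - β₁) / 3) (1 - 2 * β₁ / 3), Eq1 t β₁ = 0 → t < a)) := by
  constructor
  · intro φ hφ hφ'
    have hneg : ∀ t ∈ Set.Ico ((3 * (1 - φ) - 0.367 * (6 * φ - 3)) / 2.367) (3 * (1 - φ) / 2),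
        Eq1 φ t < 0 := by
      intro t ht
      have h1 := ht.1
      rw [div_le_iff₀ (by norm_num)] at h1
      exact case1_all φ t (by linarith [ht.2]) (by linarith [ht.2]) hφ hφ' ht.1
    refine ⟨(3 * (1 - φ) - 0.367 * (6 * φ - 3)) / 2.367, ⟨?_, ?_⟩, ?_, hneg, ?_⟩
    · rw [lt_div_iff₀ (by norm_num)]; linarith
    · rw [div_lt_iff₀ (by norm_num)]; linarith
    · intro s hs t ht hst
      have ht2 := ht.2
      have hs1 := hs.1
      rw [le_div_iff₀ (by norm_num)] at ht2
      have s2 : 0 < 3 * (1 - φ) - 2 * s := by linarith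
      have t2 : 0 < 3 * (1 - φ) - 2 * t := by linarith
      have s3 : 0 < s - 2 + 3 * φ := by linarith
      have t3 : 0 < t - 2 + 3 * φ := by linarith
      obtain ⟨qs0, qs1⟩ := qq_bounds φ s s2 s3
      obtain ⟨qt0, qt1⟩ := qq_bounds φ t t2 t3
      have hq := qq_anti_β φ s t (by linarith) hst t2
      have hQ : 0.367 ≤ qq φ t := by
        unfold qq
        rw [le_div_iff₀ (by linarith)]
        linarith
      have hG : GG (rr φ s) (qq φ s) < GG (rr φ t) (qq φ t) := by
        refine GG_strict _ _ _ _ qt0 hq qs1 (rr_pos φ s (by linarith) s2 s3) ?_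
        rw [pow_two, pow_two, ← mul_assoc, ← mul_assoc, rr_A φ s s2 s3 (by linarith),
          rr_A φ t t2 t3 (by linarith)]
        have hA : 0 < (1 - φ) / (3 * φ - 1) := div_pos (by linarith) (by linarith)
        have := mul_lt_mul_of_pos_left (poly1 _ _ hQ hq qs1) hA
        generalize (1 - φ) / (3 * φ - 1) = A at this ⊢
        linarith
      show Eq1 φ t < Eq1 φ s
      rw [Eq1_eq φ s s2 s3, Eq1_eq φ t t2 t3]
      linarith
    · intro t ht h0
      by_contra hc
      push Not at hc
      exact absurd h0 (hneg t ⟨hc, ht.2⟩).ne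
  · intro β hβ hβ'
    have hneg : ∀ t ∈ Set.Ico ((4.38 - 2.46 * β) / 5.76) (1 - 2 * β / 3),
        Eq1 t β < 0 := by
      intro t ht
      have h1 := ht.1
      rw [div_le_iff₀ (by norm_num)] at h1
      exact case2_all t β (by linarith [ht.2]) (by linarith [ht.2]) hβ hβ' ht.1
    refine ⟨(4.38 - 2.46 * β) / 5.76, ⟨?_, ?_⟩, ?_, hneg, ?_⟩
    · rw [lt_div_iff₀ (by norm_num)]; linarith
    · rw [div_lt_iff₀ (by norm_num)]; linarith
    · intro s hs t ht hst
      have ht2 := ht.2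
      have hs1 := hs.1
      rw [le_div_iff₀ (by norm_num)] at ht2
      have s2 : 0 < 3 * (1 - s) - 2 * β := by linarith
      have t2 : 0 < 3 * (1 - t) - 2 * β := by linarith
      have s3 : 0 < β - 2 + 3 * s := by linarith
      have t3 : 0 < β - 2 + 3 * t := by linarith
      obtain ⟨qs0, qs1⟩ := qq_bounds s β s2 s3
      obtain ⟨qt0, qt1⟩ := qq_bounds t β t2 t3
      have hq := qq_anti_φ β s t (by linarith) hst t2
      have hQ : 0.46 ≤ qq t β := by
        unfold qq
        rw [le_div_iff₀ (by linarith)]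
        linarith
      have hB : (0.3286 : ℝ) ≤ 2 * β / (3 * (1 - β)) := by
        rw [le_div_iff₀ (by linarith)]
        linarith
      have hG : GG (rr s β) (qq s β) < GG (rr t β) (qq t β) := by
        refine GG_strict _ _ _ _ qt0 hq qs1 (rr_pos s β (by linarith) s2 s3) ?_
        rw [pow_two, pow_two, ← mul_assoc, ← mul_assoc, rr_B s β s2 s3 (by linarith),
          rr_B t β t2 t3 (by linarith)]
        exact poly2 _ _ _ hB hQ hq qs1
      show Eq1 t β < Eq1 s β
      rw [Eq1_eq s β s2 s3, Eq1_eq t β t2 t3]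
      linarith
    · intro t ht h0
      by_contra hc
      push Not at hc
      exact absurd h0 (hneg t ⟨hc, ht.2⟩).ne
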